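/- Let (A, ≺_ω, ≻_ω, Ω) be a pre-anti-flexible family algebra with underlying Ω-relative anti-flexible product x ∗_{α,β} y := x ≻_α y + x ≺_β y and brackets [x,y]_{α,β} := x ∗_{α,β} y − y ∗_{β,α} x. Define x ∘_{α,β} y := x ∗_{α,β} y + y ∗_{β,α} x. Then for all x, y, z ∈ A and α, β, γ ∈ Ω, the ∘-associator satisfies (x ∘_{α,β} y) ∘_{αβ,γ} z − x ∘_{α,βγ} (y ∘_{β,γ} z) = [y, [x, z]_{α,γ}]_{β,αγ}. -/

import Mathlib

/-!
For any relative product `μ` over a commutative index, expanding the associator of the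
anticommutator and the double commutator `[y, [x, z]]` into triple products shows that they differ
by `D(x, y, z) + D(y, x, z) + D(x, z, y)`, where `D(x, y, z) = (x, y, z) - (z, y, x)` compares an
associator of `μ` with its reversal. For the product `≻ + ≺` of a pre-anti-flexible family, `D = 0`:
add the first axiom at `(x, y, z)` to the second one at `(x, y, z)`, and subtract the second one at
`(z, y, x)`.
-/

/-- A bilinear product `x ∗_{α,β} y` on `A` relative to `Ω`, written `μ α β x y`. The product
carries the index `α * β`; this enters only through `RelativeProduct.associator`. -/
abbrev RelativeProduct (k Ω A : Type*) [CommSemiring k] [AddCommGroup A] [Module k A] :=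
  Ω → Ω → A →ₗ[k] A →ₗ[k] A

namespace RelativeProduct

variable {k Ω A : Type*} [CommSemiring k] [AddCommGroup A] [Module k A]

/-- The bracket `[x, y]_{α,β} = x ∗_{α,β} y - y ∗_{β,α} x`. It is again a relative product, so it
can be iterated; exchanging the arguments exchanges their indices as well. -/
def commutator (μ : RelativeProduct k Ω A) : RelativeProduct k Ω A :=
  fun α β => μ α β - (μ β α).flip

/-- The product `x ∘_{α,β} y = x ∗_{α,β} y + y ∗_{β,α} x`, as a relative product whose associator
can be formed. -/
def anticommutator (μ : RelativeProduct k Ω A) : RelativeProduct k Ω A :=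
  fun α β => μ α β + (μ β α).flip

/-- The associator `(x, y, z)_{α,β,γ}` of a relative product, where `x`, `y`, `z` carry the
indices `α`, `β`, `γ`. -/
def associator [Mul Ω] (μ : RelativeProduct k Ω A) (α β γ : Ω) (x y z : A) : A :=
  μ (α * β) γ (μ α β x y) z - μ α (β * γ) x (μ β γ y z)

/-- A relative product is anti-flexible if reversing the three arguments, together with their
indices, leaves its associator unchanged. -/
def IsAntiFlexible [Mul Ω] (μ : RelativeProduct k Ω A) : Prop :=
  ∀ (α β γ : Ω) (x y z : A), μ.associator α β γ x y z = μ.associator γ β α z y x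

theorem commutator_apply (μ : RelativeProduct k Ω A) (α β : Ω) (x y : A) :
    μ.commutator α β x y = μ α β x y - μ β α y x :=
  rfl

theorem anticommutator_apply (μ : RelativeProduct k Ω A) (α β : Ω) (x y : A) :
    μ.anticommutator α β x y = μ α β x y + μ β α y x :=
  rfl

theorem associator_anticommutator_sub_commutator_commutator [CommMagma Ω]
    (μ : RelativeProduct k Ω A) (α β γ : Ω) (x y z : A) :
    μ.anticommutator.associator α β γ x y z -
        μ.commutator β (α * γ) y (μ.commutator α γ x z) =
      (μ.associator α β γ x y z - μ.associator γ β α z y x) +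
        (μ.associator β α γ y x z - μ.associator γ α β z x y) +
        (μ.associator α γ β x z y - μ.associator β γ α y z x) := by
  simp only [associator, anticommutator_apply, commutator_apply, map_add, map_sub,
    LinearMap.add_apply, mul_comm β α, mul_comm γ α, mul_comm γ β]
  abel

theorem IsAntiFlexible.associator_anticommutator [CommMagma Ω] {μ : RelativeProduct k Ω A}
    (hμ : μ.IsAntiFlexible) (α β γ : Ω) (x y z : A) :
    μ.anticommutator.associator α β γ x y z =
      μ.commutator β (α * γ) y (μ.commutator α γ x z) := by
  rw [← sub_eq_zero, associator_anticommutator_sub_commutator_commutator,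
    hμ α β γ x y z, hμ β α γ y x z, hμ α γ β x z y]
  simp only [sub_self, add_zero]

end RelativeProduct

/-- The axioms of a pre-anti-flexible family algebra, for families `prec` (`≺_ω`) and `succ`
(`≻_ω`) of bilinear operations. -/
structure IsPreAntiFlexibleFamily {k Ω A : Type*} [CommSemiring k] [Mul Ω] [AddCommGroup A]
    [Module k A] (prec succ : Ω → A →ₗ[k] A →ₗ[k] A) : Prop where
  prec_succ_sub_succ_prec : ∀ (α β : Ω) (x y z : A),
    prec β (succ α x y) z - succ α x (prec β y z) =
      prec α (succ β z y) x - succ β z (prec α y x)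
  succ_add_sub_succ_succ : ∀ (α β : Ω) (x y z : A),
    succ (α * β) (succ α x y + prec β x y) z - succ α x (succ β y z) =
      prec α (prec β z y) x - prec (β * α) z (succ β y x + prec α y x)

namespace IsPreAntiFlexibleFamily

variable {k Ω A : Type*} [CommSemiring k] [AddCommGroup A] [Module k A]
  {prec succ : Ω → A →ₗ[k] A →ₗ[k] A}

/-- The underlying relative product `x ∗_{α,β} y = x ≻_α y + x ≺_β y` of a pair of families. -/
def product (prec succ : Ω → A →ₗ[k] A →ₗ[k] A) : RelativeProduct k Ω A :=
  fun α β => succ α + prec β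

theorem product_apply (α β : Ω) (x y : A) :
    product prec succ α β x y = succ α x y + prec β x y :=
  rfl

theorem isAntiFlexible_product [Mul Ω] (h : IsPreAntiFlexibleFamily prec succ) :
    (product prec succ).IsAntiFlexible := by
  intro α β γ x y z
  have mixed := h.prec_succ_sub_succ_prec α γ x y z
  have outer := h.succ_add_sub_succ_succ α β x y z
  have outer_reversed := h.succ_add_sub_succ_succ γ β z y x
  simp only [RelativeProduct.associator, product_apply, map_add, LinearMap.add_apply]
    at mixed outer outer_reversed ⊢
  linear_combination (norm := abel) mixed + outer - outer_reversed

end IsPreAntiFlexibleFamily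

open IsPreAntiFlexibleFamily in
theorem preAntiFlexibleFamily_anticommutator_associator_general
    {k Ω A : Type*} [CommSemiring k] [CommMagma Ω] [AddCommGroup A] [Module k A]
    {prec succ : Ω → A →ₗ[k] A →ₗ[k] A} (h : IsPreAntiFlexibleFamily prec succ)
    (α β γ : Ω) (x y z : A) :
    (product prec succ).anticommutator.associator α β γ x y z =
      (product prec succ).commutator β (α * γ) y ((product prec succ).commutator α γ x z) :=
  h.isAntiFlexible_product.associator_anticommutator α β γ x y z

/-- for the anticommutator `x ∘_{α,β} y := x ∗_{α,β} y + y ∗_{β,α} x`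
of the underlying relative anti-flexible product of a pre-anti-flexible family
algebra, the ∘-associator equals `[y, [x,z]_{α,γ}]_{β,αγ}`. -/
theorem preAntiFlexibleFamily_anticommutator_associator
    (k : Type*) [Field k] (Ω : Type*) [CommSemigroup Ω]
    (A : Type*) [AddCommGroup A] [Module k A]
    (prec succ : Ω → A →ₗ[k] A →ₗ[k] A)
    (h1 : ∀ (α β : Ω) (x y z : A),
      prec β (succ α x y) z - succ α x (prec β y z) =
        prec α (succ β z y) x - succ β z (prec α y x))
    (h2 : ∀ (α β : Ω) (x y z : A),
      succ (α * β) (succ α x y + prec β x y) z - succ α x (succ β y z) =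
        prec α (prec β z y) x - prec (β * α) z (succ β y x + prec α y x))
    (star : Ω → Ω → A → A → A)
    (hstar : ∀ (α β : Ω) (x y : A), star α β x y = succ α x y + prec β x y)
    (br : Ω → Ω → A → A → A)
    (hbr : ∀ (α β : Ω) (x y : A), br α β x y = star α β x y - star β α y x)
    (circ : Ω → Ω → A → A → A)
    (hcirc : ∀ (α β : Ω) (x y : A), circ α β x y = star α β x y + star β α y x) :
    ∀ (α β γ : Ω) (x y z : A),
      circ (α * β) γ (circ α β x y) z - circ α (β * γ) x (circ β γ y z) =
        br β (α * γ) y (br α γ x z) := by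
  intro α β γ x y z
  simp only [hcirc, hbr, hstar]
  exact preAntiFlexibleFamily_anticommutator_associator_general ⟨h1, h2⟩ α β γ x y z
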